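/- Set α_m^{(ν)} = ln(1 − q^{2(m+ν)}/(1 − q^{2m}))/(2 ln q) for m ∈ ℕ. There exists M ∈ ℕ such that for all integers m ≥ M, the derivative J_ν′(z;q²) has constant sign on the open interval ]q^{−m+α_m^{(ν)}}, q^{−m}[; that is, for all z₁, z₂ in that interval, J_ν′(z₁;q²) · J_ν′(z₂;q²) > 0. -/

import Mathlib

/-!
Write `J_ν(z;q²) = c z^ν φ(z²)` with `φ(x) = ∑ c_k x^k`,
`c_k = (-1)^k q^{k(k+1)} w_k`, `w_k = 1 / ((a;q²)_k (q²;q²)_k)` and `a = q^{2(ν+1)} < 1`. Then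
`z J_ν'(z)` is `c z^ν ∑ (2k+ν) c_k z^{2k}`. For `z² = q^{-2m} u` the dominant terms are those near
`k = m`; the substitution `k = m + j` (`recentre`) turns the sum into
`(-1)^m q^{m-m²} u^m G_m(u)`, where
`G_m(u) = ∑_{j ∈ ℤ} (-1)^j q^{j(j+1)} (2m+2j+ν) u^j w_{m+j}`.

On the interval in question `1 - u = O(q^{2m})` (`interval_bound`), and
`w_k - w_∞ = O(q^{2k})`. Since `θ(x) = ∑ (-1)^j q^{j(j+1)} x^j` vanishes at `x = 1`, the terms of
size `m` cancel and `G_m(u) = 2 w_∞ θ'(1) + O(m q^{2m})` (`Gser_asymp`). So `J_ν'` has the sign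
of `(-1)^m θ'(1)` for large `m`, provided `θ'(1) ≠ 0`.

The latter is a consequence of Jacobi's identity, but it also follows from the same asymptotics
applied with `a = 0`, `ν = 0`, `u = 1` (`thetaD_ne_zero`): there `φ(x) = (q²x;q²)_∞` is Euler's
product, whose functional equation gives `G_{m+1}(1) = 2 φ(1) (q²;q²)_m` (`Gser_euler`), which has
a nonzero limit.
-/

open Filter

/-- The finite q-shifted factorial `(a;q)_n`. -/
noncomputable def qPoch (a q : ℝ) : ℕ → ℝ := fun n => ∏ j ∈ Finset.range n, (1 - a * q ^ j)

/-- The infinite q-shifted factorial `(a;q)_∞`. -/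
noncomputable def qPochInf (a q : ℝ) : ℝ := ∏' j : ℕ, (1 - a * q ^ j)

/-- The third Jackson (Hahn–Exton) q-Bessel function `J_ν(z;q²)` (base `q²`). -/
noncomputable def qBessel (ν q z : ℝ) : ℝ :=
  z ^ ν * (qPochInf (q ^ (2 * (ν + 1))) (q ^ 2) / qPochInf (q ^ 2) (q ^ 2)) *
    ∑' k : ℕ, ((-1 : ℝ) ^ k * q ^ (k * (k + 1)) * z ^ (2 * k) /
      (qPoch (q ^ (2 * (ν + 1))) (q ^ 2) k * qPoch (q ^ 2) (q ^ 2) k))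


/-! ### q-shifted factorials -/

lemma qPoch_succ (a p : ℝ) (k : ℕ) : qPoch a p (k + 1) = qPoch a p k * (1 - a * p ^ k) := by
  simp [qPoch, Finset.prod_range_succ]

lemma qPoch_factor_pos {a p : ℝ} (hp0 : 0 < p) (hp1 : p < 1) (ha0 : 0 ≤ a) (ha1 : a < 1) (k : ℕ) :
    0 < 1 - a * p ^ k := by
  have h1 : p ^ k ≤ 1 := pow_le_one₀ hp0.le hp1.le
  have h2 : a * p ^ k ≤ a * 1 := mul_le_mul_of_nonneg_left h1 ha0
  linarith

lemma qPoch_pos {a p : ℝ} (hp0 : 0 < p) (hp1 : p < 1) (ha0 : 0 ≤ a) (ha1 : a < 1) (k : ℕ) :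
    0 < qPoch a p k :=
  Finset.prod_pos fun j _ => qPoch_factor_pos hp0 hp1 ha0 ha1 j

lemma qPoch_anti {a p : ℝ} (hp0 : 0 < p) (hp1 : p < 1) (ha0 : 0 ≤ a) (ha1 : a < 1) :
    Antitone (qPoch a p) := by
  refine antitone_nat_of_succ_le fun k => ?_
  rw [qPoch_succ]
  have h1 := qPoch_pos hp0 hp1 ha0 ha1 k
  have h2 : 0 ≤ a * p ^ k := by positivity
  nlinarith

lemma qPoch_le_one {a p : ℝ} (hp0 : 0 < p) (hp1 : p < 1) (ha0 : 0 ≤ a) (ha1 : a < 1) (k : ℕ) :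
    qPoch a p k ≤ 1 := by
  have := qPoch_anti hp0 hp1 ha0 ha1 (Nat.zero_le k)
  simpa [qPoch] using this

lemma summable_factor {a p : ℝ} (hp0 : 0 < p) (hp1 : p < 1) : Summable fun j : ℕ => -(a * p ^ j) :=
  ((summable_geometric_of_lt_one hp0.le hp1).mul_left a).neg

lemma qPoch_tendsto {a p : ℝ} (hp0 : 0 < p) (hp1 : p < 1) :
    Tendsto (qPoch a p) atTop (nhds (qPochInf a p)) := by
  have h := Real.multipliable_one_add_of_summable (summable_factor (a := a) hp0 hp1)
  have h2 := h.hasProd.tendsto_prod_nat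
  simp only [← sub_eq_add_neg] at h2
  exact h2

lemma qPochInf_le {a p : ℝ} (hp0 : 0 < p) (hp1 : p < 1) (ha0 : 0 ≤ a) (ha1 : a < 1) (k : ℕ) :
    qPochInf a p ≤ qPoch a p k :=
  (qPoch_anti hp0 hp1 ha0 ha1).le_of_tendsto (qPoch_tendsto hp0 hp1) k

lemma qPochInf_pos {a p : ℝ} (hp0 : 0 < p) (hp1 : p < 1) (ha0 : 0 ≤ a) (ha1 : a < 1) :
    0 < qPochInf a p := by
  have h0 : 0 ≤ qPochInf a p :=
    ge_of_tendsto' (qPoch_tendsto hp0 hp1) fun k => (qPoch_pos hp0 hp1 ha0 ha1 k).le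
  have h1 : qPochInf a p ≠ 0 := by
    have := tprod_one_add_ne_zero_of_summable (f := fun j : ℕ => -(a * p ^ j))
      (fun j => by have := qPoch_factor_pos hp0 hp1 ha0 ha1 j; rw [← sub_eq_add_neg]; exact this.ne')
      (summable_factor (a := a) hp0 hp1).norm
    simpa [qPochInf, sub_eq_add_neg] using this
  exact lt_of_le_of_ne h0 h1.symm

lemma qPoch_sub_le {a p : ℝ} (hp0 : 0 < p) (hp1 : p < 1) (ha0 : 0 ≤ a) (ha1 : a < 1) (k : ℕ) :
    |qPoch a p k - qPochInf a p| ≤ p ^ k / (1 - p) := by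
  have h := dist_le_of_le_geometric_of_tendsto p 1 hp1 (f := qPoch a p) (fun n => ?_)
    (qPoch_tendsto hp0 hp1) k
  · simpa [Real.dist_eq] using h
  · rw [Real.dist_eq, qPoch_succ]
    have h1 := qPoch_pos hp0 hp1 ha0 ha1 n
    have h2 := qPoch_le_one hp0 hp1 ha0 ha1 n
    have h3 : 0 < p ^ n := by positivity
    have : qPoch a p n - qPoch a p n * (1 - a * p ^ n) = qPoch a p n * a * p ^ n := by ring
    rw [this, abs_of_nonneg (by positivity)]
    gcongr
    nlinarith

/-- The weight `1 / ((a;p)_k (p;p)_k)` of the series, extended by `0` to negative `k`. -/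
noncomputable def wt (a p : ℝ) (k : ℤ) : ℝ :=
  if k < 0 then 0 else (qPoch a p k.toNat * qPoch p p k.toNat)⁻¹

/-- The limit of `wt a p k` as `k → ∞`. -/
noncomputable def wtInf (a p : ℝ) : ℝ := (qPochInf a p * qPochInf p p)⁻¹

lemma wt_natCast (a p : ℝ) (n : ℕ) : wt a p n = (qPoch a p n * qPoch p p n)⁻¹ := by
  rw [wt, if_neg (by omega), Int.toNat_natCast]

lemma wtInf_pos {a p : ℝ} (hp0 : 0 < p) (hp1 : p < 1) (ha0 : 0 ≤ a) (ha1 : a < 1) :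
    0 < wtInf a p :=
  inv_pos.2 (mul_pos (qPochInf_pos hp0 hp1 ha0 ha1) (qPochInf_pos hp0 hp1 hp0.le hp1))

lemma wt_nonneg {a p : ℝ} (hp0 : 0 < p) (hp1 : p < 1) (ha0 : 0 ≤ a) (ha1 : a < 1) (k : ℤ) :
    0 ≤ wt a p k := by
  unfold wt
  split_ifs
  · rfl
  · exact (inv_pos.2 (mul_pos (qPoch_pos hp0 hp1 ha0 ha1 _) (qPoch_pos hp0 hp1 hp0.le hp1 _))).le

lemma wt_le {a p : ℝ} (hp0 : 0 < p) (hp1 : p < 1) (ha0 : 0 ≤ a) (ha1 : a < 1) (k : ℤ) :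
    wt a p k ≤ wtInf a p := by
  unfold wt
  split_ifs
  · exact (wtInf_pos hp0 hp1 ha0 ha1).le
  · have h1 := qPochInf_pos hp0 hp1 ha0 ha1
    have h2 := qPochInf_pos hp0 hp1 hp0.le hp1
    have h3 := qPochInf_le hp0 hp1 ha0 ha1 k.toNat
    have h4 := qPochInf_le hp0 hp1 hp0.le hp1 k.toNat
    unfold wtInf
    have h5 := h1.trans_le h3
    gcongr

/-- The weights converge geometrically; the bound also covers negative `k`, where `p ^ k ≥ 1`. -/
lemma wt_sub_le {a p : ℝ} (hp0 : 0 < p) (hp1 : p < 1) (ha0 : 0 ≤ a) (ha1 : a < 1) :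
    ∃ C : ℝ, 0 ≤ C ∧ ∀ k : ℤ, |wt a p k - wtInf a p| ≤ C * p ^ k := by
  have hW := wtInf_pos hp0 hp1 ha0 ha1
  have hp' : 0 < 1 - p := by linarith
  refine ⟨wtInf a p + wtInf a p * wtInf a p * (2 / (1 - p)), by positivity, fun k => ?_⟩
  by_cases hk : k < 0
  · have : (1 : ℝ) ≤ p ^ k := by
      obtain ⟨n, rfl⟩ : ∃ n : ℕ, k = -(n : ℤ) := ⟨k.natAbs, by omega⟩
      rw [zpow_neg, zpow_natCast]
      exact (one_le_inv₀ (by positivity)).2 (pow_le_one₀ hp0.le hp1.le)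
    simp only [wt, hk, if_true, zero_sub, abs_neg, abs_of_pos hW]
    have : 0 ≤ wtInf a p * wtInf a p * (2 / (1 - p)) := by positivity
    nlinarith
  · obtain ⟨n, rfl⟩ : ∃ n : ℕ, k = (n : ℤ) := ⟨k.toNat, by omega⟩
    have hw := wt_le hp0 hp1 ha0 ha1 (n : ℤ)
    have hw0 := wt_nonneg hp0 hp1 ha0 ha1 (n : ℤ)
    have h1 := qPochInf_pos hp0 hp1 ha0 ha1
    have h2 := qPochInf_pos hp0 hp1 hp0.le hp1
    have h3 := qPoch_pos hp0 hp1 ha0 ha1 n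
    have h4 := qPoch_pos hp0 hp1 hp0.le hp1 n
    have h5 := qPoch_sub_le hp0 hp1 ha0 ha1 n
    have h6 := qPoch_sub_le hp0 hp1 hp0.le hp1 n
    have h7 := qPoch_le_one hp0 hp1 ha0 ha1 n
    have h8 : qPochInf p p ≤ 1 := (qPochInf_le hp0 hp1 hp0.le hp1 n).trans
      (qPoch_le_one hp0 hp1 hp0.le hp1 n)
    have hdiff : wt a p n - wtInf a p = - (wt a p n * wtInf a p *
        (qPoch a p n * (qPoch p p n - qPochInf p p) +
          (qPoch a p n - qPochInf a p) * qPochInf p p)) := by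
      rw [wt_natCast, wtInf]
      field_simp
      ring
    have hin : |qPoch a p n * (qPoch p p n - qPochInf p p) +
          (qPoch a p n - qPochInf a p) * qPochInf p p| ≤ 2 / (1 - p) * p ^ n := by
      refine (abs_add_le _ _).trans ?_
      rw [abs_mul, abs_mul, abs_of_pos h3, abs_of_pos h2]
      have e1 : qPoch a p n * |qPoch p p n - qPochInf p p| ≤ 1 * (p ^ n / (1 - p)) := by
        gcongr
      have e2 : |qPoch a p n - qPochInf a p| * qPochInf p p ≤ (p ^ n / (1 - p)) * 1 := by
        gcongr
      calc _ ≤ 1 * (p ^ n / (1 - p)) + (p ^ n / (1 - p)) * 1 := add_le_add e1 e2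
        _ = _ := by ring
    rw [hdiff, abs_neg, abs_mul, abs_of_nonneg (mul_nonneg hw0 hW.le), zpow_natCast]
    have hpn : 0 < p ^ n := by positivity
    calc _ ≤ wtInf a p * wtInf a p * (2 / (1 - p) * p ^ n) := by gcongr
      _ ≤ _ := by nlinarith [mul_pos hW hpn]

/-! ### Gaussian summability over the integers -/

lemma summable_gauss_nat {q R : ℝ} (hq0 : 0 < q) (hq1 : q < 1) (hR : 0 < R) :
    Summable fun n : ℕ => q ^ (n * n) * R ^ n := by
  refine summable_of_ratio_test_tendsto_lt_one (l := 0) one_pos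
    (Eventually.of_forall fun n => by positivity) ?_
  have h : Tendsto (fun n : ℕ => (q * R) * (q ^ 2) ^ n) atTop (nhds ((q * R) * 0)) :=
    (tendsto_pow_atTop_nhds_zero_of_lt_one (by positivity) (by nlinarith)).const_mul _
  rw [mul_zero] at h
  refine h.congr fun n => ?_
  rw [Real.norm_of_nonneg (by positivity), Real.norm_of_nonneg (by positivity)]
  have : q ^ ((n + 1) * (n + 1)) = q ^ (n * n) * (q ^ 2) ^ n * q := by
    rw [← pow_mul, ← pow_add, ← pow_succ]; congr 1; ring
  rw [this, pow_succ R]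
  field_simp

lemma summable_gauss {q R : ℝ} (hq0 : 0 < q) (hq1 : q < 1) (hR : 0 < R) :
    Summable fun j : ℤ => q ^ (j * (j + 1)) * R ^ j.natAbs := by
  refine Summable.of_nat_of_neg ?_ ?_
  · refine (summable_gauss_nat hq0 hq1 (mul_pos hq0 hR)).congr fun n => ?_
    have : ((n : ℤ) * (n + 1)) = ((n * n + n : ℕ) : ℤ) := by push_cast; ring
    rw [this, zpow_natCast, pow_add, mul_pow]; simp; ring
  · refine (summable_gauss_nat hq0 hq1 (div_pos hR hq0)).congr fun n => ?_
    have : (-(n : ℤ) * (-n + 1)) = ((n * n : ℕ) : ℤ) - (n : ℕ) := by push_cast; ring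
    rw [this, zpow_sub₀ hq0.ne', zpow_natCast, zpow_natCast, div_pow]; simp; field_simp

lemma natAbs_le_two_pow (j : ℤ) : |(j : ℝ)| ≤ 2 ^ j.natAbs := by
  rw [← Int.cast_abs, ← Int.natCast_natAbs]
  exact_mod_cast Nat.lt_two_pow_self.le

lemma zpow_le_two_pow {u : ℝ} (hu : 1 / 2 ≤ u) (hu1 : u ≤ 1) (j : ℤ) : u ^ j ≤ 2 ^ j.natAbs := by
  have h0 : 0 < u := by linarith
  obtain ⟨n, rfl | rfl⟩ := j.eq_nat_or_neg
  · simp only [zpow_natCast, Int.natAbs_natCast]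
    exact (pow_le_one₀ h0.le hu1).trans (one_le_pow₀ (by norm_num))
  · simp only [zpow_neg, zpow_natCast, Int.natAbs_neg, Int.natAbs_natCast]
    rw [← inv_pow]
    gcongr
    rw [inv_le_comm₀ h0 (by norm_num)]; linarith

lemma abs_zpow_sub_one_le {u : ℝ} (hu : 1 / 2 ≤ u) (hu1 : u ≤ 1) (j : ℤ) :
    |u ^ j - 1| ≤ 4 ^ j.natAbs * (1 - u) := by
  have h0 : 0 < u := by linarith
  have key : ∀ n : ℕ, 1 - u ^ n ≤ 2 ^ n * (1 - u) := fun n => by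
    have h1 := one_add_mul_le_pow (a := u - 1) (by linarith) n
    have h2 : (n : ℝ) ≤ 2 ^ n := by exact_mod_cast Nat.lt_two_pow_self.le
    rw [show 1 + (u - 1) = u by ring] at h1
    nlinarith
  have h42 : ∀ n : ℕ, (4 : ℝ) ^ n = 2 ^ n * 2 ^ n := fun n => by rw [← mul_pow]; norm_num
  have h12 : ∀ n : ℕ, (1 : ℝ) ≤ 2 ^ n := fun n => one_le_pow₀ (by norm_num)
  obtain ⟨n, rfl | rfl⟩ := j.eq_nat_or_neg
  · have h1 : u ^ n ≤ 1 := pow_le_one₀ h0.le hu1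
    simp only [zpow_natCast, Int.natAbs_natCast]
    rw [abs_sub_comm, abs_of_nonneg (by linarith), h42]
    have := mul_nonneg (mul_nonneg (by linarith [h12 n] : (0 : ℝ) ≤ 2 ^ n - 1)
      (by linarith [h12 n] : (0 : ℝ) ≤ 2 ^ n)) (by linarith : 0 ≤ 1 - u)
    nlinarith [key n]
  · have h1 : u ^ n ≤ 1 := pow_le_one₀ h0.le hu1
    have h3 := zpow_le_two_pow hu hu1 (-(n : ℤ))
    simp only [zpow_neg, zpow_natCast, Int.natAbs_neg, Int.natAbs_natCast] at h3 ⊢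
    have hun : 0 < u ^ n := by positivity
    have h4 : (u ^ n)⁻¹ - 1 = (u ^ n)⁻¹ * (1 - u ^ n) := by field_simp
    rw [h4, abs_of_nonneg (mul_nonneg (by positivity) (by linarith)), h42, mul_assoc]
    exact mul_le_mul h3 (key n) (by linarith) (by positivity)

/-! ### Asymptotics of the recentred series -/

/-- The series `∑ (2k + ν) c_k z^{2k}` at `z = q^{-m} √u`, recentred at its dominant index
`k = m + j` and divided by `(-1)^m q^{m - m²} u^m`. -/
noncomputable def Gser (q a ν : ℝ) (m : ℕ) (u : ℝ) : ℝ :=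
  ∑' j : ℤ, (-1 : ℝ) ^ j * q ^ (j * (j + 1)) * (2 * m + 2 * j + ν) * u ^ j * wt a (q ^ 2) (m + j)

/-- The derivative at `1` of the theta function `∑ (-1)^j q^{j(j+1)} x^j`. -/
noncomputable def thetaD (q : ℝ) : ℝ :=
  ∑' j : ℤ, (-1 : ℝ) ^ j * q ^ (j * (j + 1)) * j

lemma abs_gauss {q : ℝ} (hq0 : 0 < q) (j : ℤ) :
    |(-1 : ℝ) ^ j * q ^ (j * (j + 1))| = q ^ (j * (j + 1)) := by
  rw [abs_mul, abs_neg_one_zpow, one_mul, abs_of_pos (by positivity)]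

lemma summable_theta {q : ℝ} (hq0 : 0 < q) (hq1 : q < 1) :
    Summable fun j : ℤ => (-1 : ℝ) ^ j * q ^ (j * (j + 1)) := by
  refine Summable.of_norm_bounded (summable_gauss hq0 hq1 one_pos) fun j => ?_
  rw [Real.norm_eq_abs, abs_gauss hq0]; simp

lemma summable_thetaD {q : ℝ} (hq0 : 0 < q) (hq1 : q < 1) :
    Summable fun j : ℤ => (-1 : ℝ) ^ j * q ^ (j * (j + 1)) * j := by
  refine Summable.of_norm_bounded (summable_gauss hq0 hq1 two_pos) fun j => ?_
  rw [Real.norm_eq_abs, abs_mul, abs_gauss hq0]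
  exact mul_le_mul_of_nonneg_left (natAbs_le_two_pow j) (by positivity)

/-- The theta function vanishes at `1`: the terms `j` and `-1 - j` cancel. -/
lemma theta_one {q : ℝ} : ∑' j : ℤ, (-1 : ℝ) ^ j * q ^ (j * (j + 1)) = 0 := by
  have h := (Equiv.subLeft (-1 : ℤ)).tsum_eq fun j : ℤ => (-1 : ℝ) ^ j * q ^ (j * (j + 1))
  have h2 : ∀ j : ℤ, (-1 : ℝ) ^ (Equiv.subLeft (-1 : ℤ) j) *
      q ^ ((Equiv.subLeft (-1 : ℤ) j) * ((Equiv.subLeft (-1 : ℤ) j) + 1)) =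
      - ((-1 : ℝ) ^ j * q ^ (j * (j + 1))) := fun j => by
    simp only [Equiv.subLeft_apply]
    rw [show (-1 - j) * (-1 - j + 1) = j * (j + 1) by ring, zpow_sub₀ (by norm_num)]
    rcases Int.even_or_odd j with hj | hj
    · simp [hj.neg_one_zpow]
    · simp [hj.neg_one_zpow]
  simp only [h2, tsum_neg] at h
  linarith

/-- As `m → ∞`, with `1 - u = O(q^{2m})`, the recentred series tends to `2 w_∞ θ'(1)`, at the rate
`m q^{2m}`. The vanishing of the theta function at `1` absorbs the factor `2m`. -/
lemma Gser_asymp {q a : ℝ} (ν : ℝ) {D : ℝ} (hq0 : 0 < q) (hq1 : q < 1) (ha0 : 0 ≤ a) (ha1 : a < 1)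
    (hD : 0 ≤ D) : ∃ K : ℝ, ∀ m : ℕ, 1 ≤ m → ∀ u : ℝ, 1 / 2 ≤ u → u ≤ 1 →
      1 - u ≤ D * (q ^ 2) ^ m →
      |Gser q a ν m u - 2 * wtInf a (q ^ 2) * thetaD q| ≤ K * (m * (q ^ 2) ^ m) := by
  have hp0 : 0 < q ^ 2 := by positivity
  have hp1 : q ^ 2 < 1 := by nlinarith
  obtain ⟨C, hC0, hC⟩ := wt_sub_le hp0 hp1 ha0 ha1
  have hW := wtInf_pos hp0 hp1 ha0 ha1
  set W := wtInf a (q ^ 2) with hWdef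
  set P : ℝ := (q ^ 2)⁻¹ with hP
  have hP1 : 1 ≤ P := (one_le_inv₀ hp0).2 hp1.le
  -- the dominating sequence, up to the factor `m q^{2m}`
  set B : ℤ → ℝ := fun j => (4 + |ν|) * (W * D + C) *
    (q ^ (j * (j + 1)) * (8 * P) ^ j.natAbs) with hB
  have hBs : Summable B := (summable_gauss hq0 hq1 (by positivity)).mul_left _
  refine ⟨∑' j, B j, fun m hm u hu hu1 hDu => ?_⟩
  have hm1 : (1 : ℝ) ≤ m := by exact_mod_cast hm
  have hpm : 0 < (q ^ 2) ^ m := by positivity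
  have hbound : ∀ j : ℤ, |(-1 : ℝ) ^ j * q ^ (j * (j + 1)) * (2 * m + 2 * j + ν) *
      (u ^ j * wt a (q ^ 2) (m + j) - W)| ≤ B j * (m * (q ^ 2) ^ m) := fun j => by
    have e1 : |2 * (m : ℝ) + 2 * j + ν| ≤ (4 + |ν|) * m * 2 ^ j.natAbs := by
      have h1 := natAbs_le_two_pow j
      have h2 : (1 : ℝ) ≤ 2 ^ j.natAbs := one_le_pow₀ (by norm_num)
      have h3 := abs_nonneg ν
      have h4 : (1 : ℝ) ≤ m * 2 ^ j.natAbs := one_le_mul_of_one_le_of_one_le hm1 h2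
      calc |2 * (m : ℝ) + 2 * j + ν| ≤ |2 * (m : ℝ)| + |2 * (j : ℝ)| + |ν| := abs_add_three _ _ _
        _ = 2 * m + 2 * |(j : ℝ)| + |ν| := by
            rw [abs_of_nonneg (by positivity), abs_mul, abs_two]
        _ ≤ _ := by nlinarith
    have e2 : |u ^ j * wt a (q ^ 2) (m + j) - W| ≤
        (W * D + C) * (4 * P) ^ j.natAbs * (q ^ 2) ^ m := by
      have h1 := abs_zpow_sub_one_le hu hu1 j
      have h2 := zpow_le_two_pow hu hu1 j
      have h3 := hC (m + j)
      have hu0 : 0 < u := by linarith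
      have h4 : (q ^ 2) ^ ((m : ℤ) + j) ≤ (q ^ 2) ^ m * P ^ j.natAbs := by
        rw [zpow_add₀ hp0.ne', zpow_natCast]
        gcongr
        obtain ⟨n, rfl | rfl⟩ := j.eq_nat_or_neg
        · simp only [zpow_natCast, Int.natAbs_natCast]
          exact (pow_le_one₀ hp0.le hp1.le).trans (one_le_pow₀ hP1)
        · simp [hP]
      have h5 : u ^ j * wt a (q ^ 2) (m + j) - W =
        u ^ j * (wt a (q ^ 2) (m + j) - W) + (u ^ j - 1) * W := by ring
      rw [h5]
      refine (abs_add_le _ _).trans ?_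
      rw [abs_mul, abs_mul, abs_of_pos hW, abs_of_pos (by positivity : 0 < u ^ j)]
      have h6 : u ^ j * |wt a (q ^ 2) (m + j) - W| ≤
          4 ^ j.natAbs * (C * ((q ^ 2) ^ m * P ^ j.natAbs)) := by
        have : (2 : ℝ) ^ j.natAbs ≤ 4 ^ j.natAbs := by gcongr; norm_num
        refine mul_le_mul (h2.trans this) (h3.trans ?_) (abs_nonneg _) (by positivity)
        gcongr
      have h7 : |u ^ j - 1| * W ≤ 4 ^ j.natAbs * (D * (q ^ 2) ^ m) * P ^ j.natAbs * W := by
        gcongr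
        calc |u ^ j - 1| ≤ 4 ^ j.natAbs * (1 - u) := h1
          _ ≤ 4 ^ j.natAbs * (D * (q ^ 2) ^ m) := by gcongr
          _ ≤ _ := le_mul_of_one_le_right (by positivity) (one_le_pow₀ hP1)
      calc _ ≤ _ := add_le_add h6 h7
        _ = _ := by rw [mul_pow]; ring
    rw [abs_mul, abs_mul, abs_gauss hq0]
    calc _ ≤ q ^ (j * (j + 1)) * ((4 + |ν|) * m * 2 ^ j.natAbs) *
          ((W * D + C) * (4 * P) ^ j.natAbs * (q ^ 2) ^ m) := by gcongr
      _ = _ := by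
        simp only [hB]
        rw [show (8 : ℝ) * P = 2 * (4 * P) by ring, mul_pow 2]; ring
  have hBm := hBs.mul_right (m * (q ^ 2) ^ m)
  have hs : Summable fun j : ℤ => (-1 : ℝ) ^ j * q ^ (j * (j + 1)) * (2 * m + 2 * j + ν) *
      (u ^ j * wt a (q ^ 2) (m + j) - W) := Summable.of_norm_bounded hBm hbound
  have hmain : Gser q a ν m u - 2 * W * thetaD q = ∑' j : ℤ, (-1 : ℝ) ^ j * q ^ (j * (j + 1)) *
      (2 * m + 2 * j + ν) * (u ^ j * wt a (q ^ 2) (m + j) - W) := by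
    have t1 := (summable_theta hq0 hq1).hasSum
    rw [theta_one] at t1
    have t2 := (summable_thetaD hq0 hq1).hasSum
    have t3 := (hs.hasSum.add ((t1.mul_left ((2 * m + ν) * W)).add (t2.mul_left (2 * W)))).tsum_eq
    rw [mul_zero, zero_add] at t3
    rw [← add_sub_cancel_right (∑' j : ℤ, (-1 : ℝ) ^ j * q ^ (j * (j + 1)) *
      (2 * m + 2 * j + ν) * (u ^ j * wt a (q ^ 2) (m + j) - W)) (2 * W * thetaD q), thetaD, ← t3,
      Gser]
    congr 2
    funext j
    ring
  rw [hmain, ← tsum_mul_right]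
  rw [← Real.norm_eq_abs]
  exact tsum_of_norm_bounded hBm.hasSum hbound

/-! ### The power series and its derivative -/

/-- The coefficient `(-1)^k q^{k(k+1)} / ((a;q²)_k (q²;q²)_k)`. -/
noncomputable def cf (q a : ℝ) (k : ℕ) : ℝ :=
  (-1 : ℝ) ^ k * q ^ (k * (k + 1)) * wt a (q ^ 2) k

/-- The entire function `∑ c_k x^k`; the q-Bessel function is `z^ν phi(z²)` up to a constant. -/
noncomputable def phi (q a x : ℝ) : ℝ := ∑' k : ℕ, cf q a k * x ^ k

/-- The function `x phi'(x) = ∑ k c_k x^k`. -/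
noncomputable def phiE (q a x : ℝ) : ℝ := ∑' k : ℕ, k * cf q a k * x ^ k

lemma summable_cf {q a R : ℝ} (hq0 : 0 < q) (hq1 : q < 1) (ha0 : 0 ≤ a) (ha1 : a < 1)
    (hR : 0 < R) : Summable fun k : ℕ => |cf q a k| * R ^ k := by
  have hp0 : 0 < q ^ 2 := by positivity
  have hp1 : q ^ 2 < 1 := by nlinarith
  refine Summable.of_norm_bounded
    ((summable_gauss_nat hq0 hq1 hR).mul_left (wtInf a (q ^ 2))) fun k => ?_
  have h1 := wt_le hp0 hp1 ha0 ha1 k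
  have h2 := wt_nonneg hp0 hp1 ha0 ha1 k
  have h3 : q ^ (k * (k + 1)) ≤ q ^ (k * k) :=
    pow_le_pow_of_le_one hq0.le hq1.le (by nlinarith)
  rw [Real.norm_of_nonneg (by positivity), cf, abs_mul, abs_mul, abs_pow, abs_neg, abs_one, one_pow,
    one_mul, abs_of_nonneg h2, abs_of_pos (by positivity)]
  calc _ ≤ q ^ (k * k) * wtInf a (q ^ 2) * R ^ k := by gcongr
    _ = _ := by ring

lemma summable_k_cf {q a R : ℝ} (hq0 : 0 < q) (hq1 : q < 1) (ha0 : 0 ≤ a) (ha1 : a < 1)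
    (hR : 0 < R) : Summable fun k : ℕ => k * |cf q a k| * R ^ k := by
  refine Summable.of_norm_bounded (summable_cf hq0 hq1 ha0 ha1 (by positivity : 0 < 2 * R))
    fun k => ?_
  rw [Real.norm_of_nonneg (by positivity), mul_pow]
  have : (k : ℝ) ≤ 2 ^ k := by exact_mod_cast Nat.lt_two_pow_self.le
  calc _ ≤ 2 ^ k * |cf q a k| * R ^ k := by gcongr
    _ = _ := by ring

lemma summable_phi {q a : ℝ} (hq0 : 0 < q) (hq1 : q < 1) (ha0 : 0 ≤ a) (ha1 : a < 1)
    (x : ℝ) : Summable fun k : ℕ => cf q a k * x ^ k := by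
  refine Summable.of_norm_bounded (summable_cf hq0 hq1 ha0 ha1 (by positivity : 0 < |x| + 1))
    fun k => ?_
  rw [norm_mul, norm_pow, Real.norm_eq_abs, Real.norm_eq_abs]
  gcongr
  linarith

lemma summable_phiE {q a : ℝ} (hq0 : 0 < q) (hq1 : q < 1) (ha0 : 0 ≤ a) (ha1 : a < 1)
    (x : ℝ) : Summable fun k : ℕ => k * cf q a k * x ^ k := by
  refine Summable.of_norm_bounded (summable_k_cf hq0 hq1 ha0 ha1 (by positivity : 0 < |x| + 1))
    fun k => ?_
  rw [norm_mul, norm_mul, norm_pow, Real.norm_eq_abs, Real.norm_eq_abs, Real.norm_eq_abs,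
    Nat.abs_cast]
  gcongr
  linarith

lemma hasDerivAt_phi {q a : ℝ} (hq0 : 0 < q) (hq1 : q < 1) (ha0 : 0 ≤ a) (ha1 : a < 1)
    (x : ℝ) : ∃ d, HasDerivAt (phi q a) d x ∧ x * d = phiE q a x := by
  refine ⟨∑' k : ℕ, cf q a k * (k * x ^ (k - 1)), ?_, ?_⟩
  · have hR : 0 < |x| + 1 := by positivity
    have key := hasDerivAt_tsum_of_isPreconnected (t := Metric.ball (0 : ℝ) (|x| + 1))
      (g := fun (k : ℕ) (y : ℝ) => cf q a k * y ^ k)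
      (g' := fun (k : ℕ) (y : ℝ) => cf q a k * (k * y ^ (k - 1)))
      (summable_k_cf hq0 hq1 ha0 ha1 hR) Metric.isOpen_ball
      (convex_ball _ _).isPreconnected
      (fun k y _ => (hasDerivAt_pow k y).const_mul _) (fun k y hy => ?_) (y₀ := 0)
      (Metric.mem_ball_self hR) (summable_phi hq0 hq1 ha0 ha1 0) (y := x)
      (by rw [mem_ball_zero_iff, Real.norm_eq_abs]; linarith)
    · exact key
    have hy' : |y| ≤ |x| + 1 := by simpa using (mem_ball_zero_iff.1 hy).le
    rw [norm_mul, norm_mul, norm_pow, Real.norm_eq_abs, Real.norm_eq_abs, Real.norm_eq_abs,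
      Nat.abs_cast]
    have h1 : |y| ^ (k - 1) ≤ (|x| + 1) ^ k :=
      (pow_le_pow_left₀ (abs_nonneg _) hy' _).trans
        (pow_le_pow_right₀ (by linarith [abs_nonneg x]) (by omega))
    calc _ ≤ |cf q a k| * (k * (|x| + 1) ^ k) := by gcongr
      _ = _ := by ring
  · rw [phiE, ← tsum_mul_left]
    congr 1
    funext k
    rcases k with _ | k
    · simp
    · rw [Nat.add_sub_cancel, pow_succ]; ring

/-- Recentring: `ν phi + 2 x phi'` at `x = q^{-2m} u` in terms of `Gser`. -/
lemma recentre {q a : ℝ} (ν : ℝ) (hq0 : 0 < q) (hq1 : q < 1) (ha0 : 0 ≤ a) (ha1 : a < 1)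
    (m : ℕ) {u : ℝ} (hu : 0 < u) :
    ν * phi q a (u / (q ^ 2) ^ m) + 2 * phiE q a (u / (q ^ 2) ^ m) =
      (-1) ^ m * q ^ ((m : ℤ) - m * m) * u ^ m * Gser q a ν m u := by
  have h1 : ν * phi q a (u / (q ^ 2) ^ m) + 2 * phiE q a (u / (q ^ 2) ^ m) =
      ∑' k : ℕ, (2 * k + ν) * cf q a k * (u / (q ^ 2) ^ m) ^ k := by
    rw [phi, phiE, ← tsum_mul_left, ← tsum_mul_left, ← Summable.tsum_add
      ((summable_phi hq0 hq1 ha0 ha1 _).mul_left _) ((summable_phiE hq0 hq1 ha0 ha1 _).mul_left _)]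
    congr 1
    funext k
    ring
  set g : ℤ → ℝ := fun j => (-1 : ℝ) ^ j * q ^ (j * (j + 1)) * (2 * m + 2 * j + ν) * u ^ j *
    wt a (q ^ 2) (m + j) with hg
  have h2 : Gser q a ν m u = ∑' k : ℤ, g (k - m) := ((Equiv.subRight (m : ℤ)).tsum_eq g).symm
  have h3 : ∑' k : ℤ, g (k - m) = ∑' k : ℕ, g ((k : ℤ) - m) := by
    refine (Function.Injective.tsum_eq (f := fun k : ℤ => g (k - m)) Nat.cast_injective ?_).symm
    intro k hk
    by_contra hk'
    have hneg : k < 0 := by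
      by_contra h
      exact hk' ⟨k.toNat, by simp; omega⟩
    apply hk
    simp [hg, wt, hneg]
  rw [h1, h2, h3, ← tsum_mul_left]
  congr 1
  funext k
  have e1 : (m : ℤ) + (k - m) = k := by ring
  have e2 : q ^ (((k : ℤ) - m) * ((k : ℤ) - m + 1)) * q ^ ((m : ℤ) - m * m) =
      q ^ (k * (k + 1)) / ((q ^ 2) ^ m) ^ k := by
    rw [← zpow_add₀ hq0.ne', ← pow_mul, ← pow_mul, ← zpow_natCast, ← zpow_natCast,
      ← zpow_sub₀ hq0.ne']
    congr 1
    push_cast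
    ring
  have e3 : (-1 : ℝ) ^ ((k : ℤ) - m) * (-1) ^ m = (-1) ^ k := by
    rw [zpow_sub₀ (by norm_num), zpow_natCast, zpow_natCast, div_mul_cancel₀]
    positivity
  have e4 : u ^ ((k : ℤ) - m) * u ^ m = u ^ k := by
    rw [zpow_sub₀ hu.ne', zpow_natCast, zpow_natCast, div_mul_cancel₀]
    positivity
  simp only [hg, e1, cf]
  calc (2 * (k : ℝ) + ν) * ((-1) ^ k * q ^ (k * (k + 1)) * wt a (q ^ 2) k) *
        (u / (q ^ 2) ^ m) ^ k
      = (2 * (k : ℝ) + ν) * (-1) ^ k * (q ^ (k * (k + 1)) / ((q ^ 2) ^ m) ^ k) * u ^ k *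
        wt a (q ^ 2) k := by rw [div_pow]; ring
    _ = _ := by
      rw [← e2, ← e3, ← e4]
      push_cast
      ring

/-! ### Euler's series and the simple zero of the theta function -/

lemma cf_zero_rec {q : ℝ} (hq0 : 0 < q) (hq1 : q < 1) (k : ℕ) :
    cf q 0 (k + 1) * (1 - (q ^ 2) ^ (k + 1)) = - (q ^ 2) ^ (k + 1) * cf q 0 k := by
  have hp0 : 0 < q ^ 2 := by positivity
  have hp1 : q ^ 2 < 1 := by nlinarith
  have h1 := qPoch_pos hp0 hp1 hp0.le hp1 k
  have h2 := qPoch_factor_pos hp0 hp1 hp0.le hp1 k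
  have h0 : ∀ n, qPoch 0 (q ^ 2) n = 1 := fun n => by simp [qPoch]
  rw [cf, cf, wt_natCast, wt_natCast, h0, h0, qPoch_succ,
    show 1 - (q ^ 2) ^ (k + 1) = 1 - q ^ 2 * (q ^ 2) ^ k by ring,
    show q ^ ((k + 1) * (k + 1 + 1)) = q ^ (k * (k + 1)) * (q ^ 2) ^ (k + 1) by
      rw [← pow_mul, ← pow_add]; congr 1; ring, pow_succ (-1 : ℝ)]
  field_simp

/-- `phi q 0 x = (q² x; q²)_∞`, in the form of its functional equation. -/
lemma phi_rec {q : ℝ} (hq0 : 0 < q) (hq1 : q < 1) (x : ℝ) :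
    phi q 0 x = (1 - q ^ 2 * x) * phi q 0 (q ^ 2 * x) := by
  have s1 := summable_phi hq0 hq1 le_rfl one_pos x
  have s2 := summable_phi hq0 hq1 le_rfl one_pos (q ^ 2 * x)
  have h : phi q 0 x - phi q 0 (q ^ 2 * x) = -(q ^ 2 * x) * phi q 0 (q ^ 2 * x) := by
    rw [phi, phi, ← s1.tsum_sub s2, (s1.sub s2).tsum_eq_zero_add, ← tsum_mul_left]
    simp only [pow_zero, sub_self, zero_add]
    congr 1
    funext k
    have := cf_zero_rec hq0 hq1 k
    rw [mul_pow]
    linear_combination x ^ (k + 1) * this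
  linarith

lemma phiE_rec {q : ℝ} (hq0 : 0 < q) (hq1 : q < 1) (x : ℝ) :
    phiE q 0 x = (1 - q ^ 2 * x) * phiE q 0 (q ^ 2 * x) - q ^ 2 * x * phi q 0 (q ^ 2 * x) := by
  have s0 := summable_phi hq0 hq1 le_rfl one_pos (q ^ 2 * x)
  have s1 := summable_phiE hq0 hq1 le_rfl one_pos x
  have s2 := summable_phiE hq0 hq1 le_rfl one_pos (q ^ 2 * x)
  have h : phiE q 0 x - phiE q 0 (q ^ 2 * x) =
      -(q ^ 2 * x) * (phiE q 0 (q ^ 2 * x) + phi q 0 (q ^ 2 * x)) := by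
    rw [phiE, phiE, phi, ← s1.tsum_sub s2, (s1.sub s2).tsum_eq_zero_add, ← s2.tsum_add s0,
      ← tsum_mul_left]
    simp only [Nat.cast_zero, zero_mul, sub_self, zero_add]
    congr 1
    funext k
    have := cf_zero_rec hq0 hq1 k
    rw [mul_pow]
    push_cast
    linear_combination (k + 1) * x ^ (k + 1) * this
  linarith

/-- If `phi q 0 1` vanished, so would `phi q 0 (q^{2n})` for all `n`, whose limit is `1`. -/
lemma phi_one_ne_zero {q : ℝ} (hq0 : 0 < q) (hq1 : q < 1) : phi q 0 1 ≠ 0 := by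
  intro h
  have hp0 : 0 < q ^ 2 := by positivity
  have hp1 : q ^ 2 < 1 := by nlinarith
  have hn : ∀ n : ℕ, phi q 0 ((q ^ 2) ^ n) = 0 := fun n => by
    induction n with
    | zero => simpa using h
    | succ n ih =>
      rw [phi_rec hq0 hq1] at ih
      have := qPoch_factor_pos hp0 hp1 hp0.le hp1 n
      rw [pow_succ']
      exact (mul_eq_zero.1 ih).resolve_left this.ne'
  obtain ⟨d, hd, -⟩ := hasDerivAt_phi hq0 hq1 le_rfl one_pos (0 : ℝ)
  have ht := hd.continuousAt.tendsto.comp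
    (tendsto_pow_atTop_nhds_zero_of_lt_one hp0.le hp1)
  have h0 : phi q 0 0 = 1 := by
    rw [phi, tsum_eq_single 0 fun k hk => by simp [hk]]
    simp [cf, wt, qPoch]
  rw [h0] at ht
  have h1 : (phi q 0 ∘ fun n : ℕ => (q ^ 2) ^ n) = fun _ => 0 := funext hn
  rw [h1] at ht
  exact one_ne_zero (tendsto_nhds_unique ht tendsto_const_nhds)

lemma phi_zero_pow {q : ℝ} (hq0 : 0 < q) (hq1 : q < 1) (m : ℕ) :
    phi q 0 (1 / (q ^ 2) ^ (m + 1)) = 0 := by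
  have hp0 : 0 < q ^ 2 := by positivity
  induction m with
  | zero => rw [phi_rec hq0 hq1]; field_simp; simp
  | succ m ih =>
    rw [phi_rec hq0 hq1, show q ^ 2 * (1 / (q ^ 2) ^ (m + 1 + 1)) = 1 / (q ^ 2) ^ (m + 1) by
      rw [pow_succ _ (m + 1)]; field_simp, ih, mul_zero]

/-- The recentred derivative of Euler's product at its zero `q^{-2(m+1)}`, in closed form. -/
lemma Gser_euler {q : ℝ} (hq0 : 0 < q) (hq1 : q < 1) (m : ℕ) :
    Gser q 0 0 (m + 1) 1 = 2 * phi q 0 1 * qPoch (q ^ 2) (q ^ 2) m := by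
  have hp0 : 0 < q ^ 2 := by positivity
  have hE : ∀ m : ℕ, 2 * phiE q 0 (1 / (q ^ 2) ^ m) =
      (-1) ^ m * q ^ ((m : ℤ) - m * m) * Gser q 0 0 m 1 := fun m => by
    simpa using recentre 0 hq0 hq1 le_rfl one_pos m (one_pos : (0 : ℝ) < 1)
  induction m with
  | zero =>
    have h := hE 1
    rw [phiE_rec hq0 hq1] at h
    have e : q ^ 2 * (1 / (q ^ 2) ^ 1) = 1 := by field_simp
    rw [e] at h
    simp at h
    simp [qPoch]
    linarith
  | succ m ih =>
    have h1 := hE (m + 1)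
    have h2 := hE (m + 1 + 1)
    have e : q ^ 2 * (1 / (q ^ 2) ^ (m + 1 + 1)) = 1 / (q ^ 2) ^ (m + 1) := by
      rw [pow_succ _ (m + 1)]; field_simp
    rw [phiE_rec hq0 hq1, e, phi_zero_pow hq0 hq1] at h2
    have e2 : q ^ (((m + 1 + 1 : ℕ) : ℤ) - ((m + 1 + 1 : ℕ) : ℤ) * ((m + 1 + 1 : ℕ) : ℤ)) =
        q ^ (((m + 1 : ℕ) : ℤ) - ((m + 1 : ℕ) : ℤ) * ((m + 1 : ℕ) : ℤ)) / (q ^ 2) ^ (m + 1) := by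
      rw [← pow_mul, ← zpow_natCast, ← zpow_sub₀ hq0.ne']
      congr 1; push_cast; ring
    rw [e2, mul_zero, sub_zero, mul_left_comm, h1, ih, pow_succ (-1 : ℝ) (m + 1)] at h2
    set Q := q ^ (((m + 1 : ℕ) : ℤ) - ((m + 1 : ℕ) : ℤ) * ((m + 1 : ℕ) : ℤ)) with hQdef
    have hQ : Q ≠ 0 := zpow_ne_zero _ hq0.ne'
    have hs : (-1 : ℝ) ^ (m + 1) ≠ 0 := pow_ne_zero _ (by norm_num)
    have hP : (q ^ 2) ^ (m + 1) ≠ 0 := by positivity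
    have hne : (-1 : ℝ) ^ (m + 1) * Q / (q ^ 2) ^ (m + 1) ≠ 0 := div_ne_zero (mul_ne_zero hs hQ) hP
    apply mul_left_cancel₀ hne
    rw [qPoch_succ, ← pow_succ' (q ^ 2) m]
    have h3 : (1 - 1 / (q ^ 2) ^ (m + 1)) = ((q ^ 2) ^ (m + 1) - 1) / (q ^ 2) ^ (m + 1) := by
      field_simp
    rw [h3] at h2
    linear_combination h2

/-- Jacobi: the theta function has a simple zero at `1`. -/
lemma thetaD_ne_zero {q : ℝ} (hq0 : 0 < q) (hq1 : q < 1) : thetaD q ≠ 0 := by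
  have hp0 : 0 < q ^ 2 := by positivity
  have hp1 : q ^ 2 < 1 := by nlinarith
  obtain ⟨K, hK⟩ := Gser_asymp (a := 0) 0 (D := 0) hq0 hq1 le_rfl one_pos le_rfl
  intro h
  have h1 : Tendsto (fun m : ℕ => Gser q 0 0 (m + 1) 1) atTop (nhds 0) := by
    have ht : Tendsto (fun m : ℕ => K * ((m : ℝ) * (q ^ 2) ^ m)) atTop (nhds (K * 0)) :=
      (tendsto_self_mul_const_pow_of_lt_one hp0.le hp1).const_mul K
    rw [mul_zero] at ht
    refine squeeze_zero_norm (fun m => ?_) (ht.comp (tendsto_add_atTop_nat 1))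
    have := hK (m + 1) (by omega) 1 (by norm_num) le_rfl (by simp)
    rw [h, mul_zero, sub_zero] at this
    simpa using this
  simp only [Gser_euler hq0 hq1] at h1
  have h2 := (qPoch_tendsto (a := q ^ 2) hp0 hp1).const_mul (2 * phi q 0 1)
  have h3 := tendsto_nhds_unique h1 h2
  have h4 := qPochInf_pos hp0 hp1 hp0.le hp1
  have h5 := phi_one_ne_zero hq0 hq1
  exact (mul_ne_zero (mul_ne_zero two_ne_zero h5) h4.ne') h3.symm

/-! ### The q-Bessel function -/

lemma qBessel_eq (ν q z : ℝ) : qBessel ν q z =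
    z ^ ν * (qPochInf (q ^ (2 * (ν + 1))) (q ^ 2) / qPochInf (q ^ 2) (q ^ 2)) *
      phi q (q ^ (2 * (ν + 1))) (z ^ 2) := by
  rw [qBessel, phi]
  congr 2
  funext k
  rw [cf, wt_natCast, pow_mul, div_eq_mul_inv]
  ring

lemma deriv_qBessel {q ν : ℝ} (hq0 : 0 < q) (hq1 : q < 1) (hν : -1 < ν) (m : ℕ) {z : ℝ}
    (hz : 0 < z) : deriv (qBessel ν q) z =
      (qPochInf (q ^ (2 * (ν + 1))) (q ^ 2) / qPochInf (q ^ 2) (q ^ 2) * (-1) ^ m *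
        q ^ ((m : ℤ) - m * m)) * (z ^ (ν - 1) * (z ^ 2 * (q ^ 2) ^ m) ^ m) *
        Gser q (q ^ (2 * (ν + 1))) ν m (z ^ 2 * (q ^ 2) ^ m) := by
  set a := q ^ (2 * (ν + 1)) with ha
  have ha0 : 0 ≤ a := by positivity
  have ha1 : a < 1 := Real.rpow_lt_one hq0.le hq1 (by linarith)
  set c := qPochInf a (q ^ 2) / qPochInf (q ^ 2) (q ^ 2) with hc
  obtain ⟨d, hd, hd2⟩ := hasDerivAt_phi hq0 hq1 ha0 ha1 (z ^ 2)
  have hJ : qBessel ν q = fun z => z ^ ν * c * phi q a (z ^ 2) := funext fun z => qBessel_eq ν q z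
  have h1 : HasDerivAt (fun z : ℝ => phi q a (z ^ 2)) (d * (2 * z)) z := by
    have h2 : HasDerivAt (fun z : ℝ => z ^ 2) (2 * z) z := by simpa using hasDerivAt_pow 2 z
    exact HasDerivAt.comp (h := fun z : ℝ => z ^ 2) (h₂ := phi q a) z hd h2
  have h3 := ((Real.hasDerivAt_rpow_const (p := ν) (Or.inl hz.ne')).mul_const c).mul h1
  have hJ' : HasDerivAt (qBessel ν q)
      (ν * z ^ (ν - 1) * c * phi q a (z ^ 2) + z ^ ν * c * (d * (2 * z))) z := by rw [hJ]; exact h3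
  have hr := recentre ν hq0 hq1 ha0 ha1 m (u := z ^ 2 * (q ^ 2) ^ m) (by positivity)
  rw [mul_div_cancel_right₀ _ (by positivity : (q ^ 2) ^ m ≠ 0), ← hd2] at hr
  have hzν : z ^ ν = z ^ (ν - 1) * z := by
    rw [Real.rpow_sub_one hz.ne']; field_simp
  rw [hJ'.deriv, hzν]
  linear_combination c * z ^ (ν - 1) * hr

/-- The interval `]q^{-m+α}, q^{-m}[` in the variable `u = z² q^{2m}`. -/
lemma interval_bound {q ν α : ℝ} (hq0 : 0 < q) (hq1 : q < 1) {m : ℕ} (hm : 1 ≤ m)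
    (hα : α = Real.log (1 - q ^ (2 * ((m : ℝ) + ν)) / (1 - q ^ (2 * (m : ℝ)))) / (2 * Real.log q))
    (hsmall : q ^ (2 * ν) / (1 - q ^ 2) * (q ^ 2) ^ m ≤ 1 / 2) {z : ℝ}
    (hz : z ∈ Set.Ioo (q ^ (-(m : ℝ) + α)) (q ^ (-(m : ℝ)))) :
    0 < z ∧ 1 / 2 ≤ z ^ 2 * (q ^ 2) ^ m ∧ z ^ 2 * (q ^ 2) ^ m ≤ 1 ∧
      1 - z ^ 2 * (q ^ 2) ^ m ≤ q ^ (2 * ν) / (1 - q ^ 2) * (q ^ 2) ^ m := by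
  obtain ⟨hz1, hz2⟩ := hz
  have hp0 : 0 < q ^ 2 := by positivity
  have hp1 : q ^ 2 < 1 := by nlinarith
  have hz0 : 0 < z := (Real.rpow_pos_of_pos hq0 _).trans hz1
  have e1 : q ^ (2 * (m : ℝ)) = (q ^ 2) ^ m := by
    rw [← pow_mul, ← Real.rpow_natCast]; push_cast; rfl
  have e2 : q ^ (2 * ((m : ℝ) + ν)) = q ^ (2 * ν) * (q ^ 2) ^ m := by
    rw [mul_add, Real.rpow_add hq0, e1, mul_comm]
  have e3 : (q ^ (-(m : ℝ))) ^ 2 * (q ^ 2) ^ m = 1 := by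
    rw [Real.rpow_neg hq0.le, Real.rpow_natCast, inv_pow, ← pow_mul, ← pow_mul, mul_comm 2 m]
    exact inv_mul_cancel₀ (by positivity)
  have hpm : (q ^ 2) ^ m ≤ q ^ 2 := pow_le_of_le_one hp0.le hp1.le (by omega)
  have hν0 : 0 < q ^ (2 * ν) := Real.rpow_pos_of_pos hq0 _
  set X := 1 - q ^ (2 * ((m : ℝ) + ν)) / (1 - q ^ (2 * (m : ℝ))) with hX
  have hXb : 1 - X ≤ q ^ (2 * ν) / (1 - q ^ 2) * (q ^ 2) ^ m := by
    rw [hX, e1, e2, sub_sub_cancel, div_mul_eq_mul_div]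
    have : 0 < 1 - q ^ 2 := by linarith
    gcongr
  have hX0 : 0 < X := by linarith
  have hlog : Real.log q ≠ 0 := (Real.log_neg hq0 hq1).ne
  have e4 : (q ^ α) ^ 2 = X := by
    rw [← Real.rpow_natCast, ← Real.rpow_mul hq0.le, Real.rpow_def_of_pos hq0, hα]
    rw [show Real.log q * (Real.log X / (2 * Real.log q) * ((2 : ℕ) : ℝ)) = Real.log X by
      push_cast; field_simp]
    exact Real.exp_log hX0
  have hlow : X ≤ z ^ 2 * (q ^ 2) ^ m := by
    have h1 : (q ^ (-(m : ℝ) + α)) ^ 2 ≤ z ^ 2 := by gcongr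
    calc X = (q ^ (-(m : ℝ) + α)) ^ 2 * (q ^ 2) ^ m := by
          rw [Real.rpow_add hq0, mul_pow, e4, mul_right_comm, e3, one_mul]
      _ ≤ _ := by gcongr
  have hup : z ^ 2 * (q ^ 2) ^ m ≤ 1 := by
    rw [← e3]; gcongr
  exact ⟨hz0, by linarith, hup, by linarith⟩

theorem stmt3 (q ν : ℝ) (hq0 : 0 < q) (hq1 : q < 1) (hν : -1 < ν)
    (α : ℕ → ℝ)
    (hα : ∀ m : ℕ, α m =
      Real.log (1 - q ^ (2 * ((m : ℝ) + ν)) / (1 - q ^ (2 * (m : ℝ)))) / (2 * Real.log q)) :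
    ∃ M : ℕ, ∀ m, M ≤ m →
      ∀ z₁ ∈ Set.Ioo (q ^ (-(m : ℝ) + α m)) (q ^ (-(m : ℝ))),
      ∀ z₂ ∈ Set.Ioo (q ^ (-(m : ℝ) + α m)) (q ^ (-(m : ℝ))),
        0 < deriv (qBessel ν q) z₁ * deriv (qBessel ν q) z₂ := by
  have hp0 : 0 < q ^ 2 := by positivity
  have hp1 : q ^ 2 < 1 := by nlinarith
  set a := q ^ (2 * (ν + 1)) with ha
  have ha0 : 0 ≤ a := by positivity
  have ha1 : a < 1 := Real.rpow_lt_one hq0.le hq1 (by linarith)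
  set D := q ^ (2 * ν) / (1 - q ^ 2) with hD
  have hD0 : 0 ≤ D := div_nonneg (Real.rpow_pos_of_pos hq0 _).le (by linarith)
  obtain ⟨K, hK⟩ := Gser_asymp ν (D := D) hq0 hq1 ha0 ha1 hD0
  set L := 2 * wtInf a (q ^ 2) * thetaD q with hL
  have hL0 : L ≠ 0 := mul_ne_zero (mul_ne_zero two_ne_zero (wtInf_pos hp0 hp1 ha0 ha1).ne')
    (thetaD_ne_zero hq0 hq1)
  have ev1 : ∀ᶠ m : ℕ in atTop, K * ((m : ℝ) * (q ^ 2) ^ m) < |L| := by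
    have ht := (tendsto_self_mul_const_pow_of_lt_one hp0.le hp1).const_mul K
    rw [mul_zero] at ht
    exact ht.eventually_lt_const (abs_pos.2 hL0)
  have ev2 : ∀ᶠ m : ℕ in atTop, D * (q ^ 2) ^ m < 1 / 2 := by
    have ht := (tendsto_pow_atTop_nhds_zero_of_lt_one hp0.le hp1).const_mul D
    rw [mul_zero] at ht
    exact ht.eventually_lt_const (by norm_num)
  obtain ⟨M, hM⟩ := eventually_atTop.1 ((ev1.and ev2).and (eventually_ge_atTop 1))
  refine ⟨M, fun m hm z₁ hz₁ z₂ hz₂ => ?_⟩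
  obtain ⟨⟨h1, h2⟩, h3⟩ := hM m hm
  obtain ⟨p1, l1, u1, b1⟩ := interval_bound hq0 hq1 h3 (hα m) h2.le hz₁
  obtain ⟨p2, l2, u2, b2⟩ := interval_bound hq0 hq1 h3 (hα m) h2.le hz₂
  have g1 := (hK m h3 _ l1 u1 b1).trans_lt h1
  have g2 := (hK m h3 _ l2 u2 b2).trans_lt h1
  rw [deriv_qBessel hq0 hq1 hν m p1, deriv_qBessel hq0 hq1 hν m p2, ← ha]
  have hc : qPochInf a (q ^ 2) / qPochInf (q ^ 2) (q ^ 2) * (-1) ^ m *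
      q ^ ((m : ℤ) - m * m) ≠ 0 :=
    mul_ne_zero (mul_ne_zero (div_pos (qPochInf_pos hp0 hp1 ha0 ha1)
      (qPochInf_pos hp0 hp1 hp0.le hp1)).ne' (pow_ne_zero _ (by norm_num)))
      (zpow_ne_zero _ hq0.ne')
  set c := qPochInf a (q ^ 2) / qPochInf (q ^ 2) (q ^ 2) * (-1) ^ m * q ^ ((m : ℤ) - m * m)
  set G1 := Gser q a ν m (z₁ ^ 2 * (q ^ 2) ^ m)
  set G2 := Gser q a ν m (z₂ ^ 2 * (q ^ 2) ^ m)
  have hG : 0 < G1 * G2 := by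
    rw [abs_lt] at g1 g2
    rcases lt_or_gt_of_ne hL0 with h | h
    · rw [abs_of_neg h] at g1 g2
      exact mul_pos_of_neg_of_neg (by linarith) (by linarith)
    · rw [abs_of_pos h] at g1 g2
      exact mul_pos (by linarith) (by linarith)
  have hz : 0 < (z₁ ^ (ν - 1) * (z₁ ^ 2 * (q ^ 2) ^ m) ^ m) *
      (z₂ ^ (ν - 1) * (z₂ ^ 2 * (q ^ 2) ^ m) ^ m) := by positivity
  calc 0 < c ^ 2 * ((z₁ ^ (ν - 1) * (z₁ ^ 2 * (q ^ 2) ^ m) ^ m) *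
      (z₂ ^ (ν - 1) * (z₂ ^ 2 * (q ^ 2) ^ m) ^ m)) * (G1 * G2) := by positivity
    _ = _ := by ring
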